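/- Let n ≥ 2, let P be the tropical polytope generated by v^1,…,v^p ∈ ℝ^n, assume P is pure, and let a be an (I,j)-pseudovertex of P, where I is a nonempty proper subset of {1,…,n} and j ∈ {1,…,n} \ I. Then there exist pairwise distinct indices r_k ∈ {1,…,p}, one for each k ∈ {1,…,n} \ {j}, such that: (i) for every k ∈ {1,…,n} \ (I ∪ {j}), v^{r_k} is an extreme point of P of type k and r_k ∈ S_k(a); (ii) for every i ∈ I, v^{r_i} is an extreme point of P of type j and r_i ∈ (S_i(a) ∩ S_j(a)) \ ⋃_{h∈I∖{i}} S_h(a); moreover, each point v^{r_k} (k ∈ {1,…,n} \ {j}) lies in the boundary of H(a,I), i.e., satisfies max_{i∈I}(v^{r_k}_i − a_i) = max_{l∉I}(v^{r_k}_l − a_l). In particular, the boundary of H(a,I) contains at least n−1 extreme points of P. -/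

import Mathlib

section Defs
variable {α : Type*} [LinearOrder α] [AddCommGroup α]

/-- The sector `S(a,i) = {x | x_j - a_j ≤ x_i - a_i for all j}`. -/
def sector {n : ℕ} (a : Fin n → α) (i : Fin n) : Set (Fin n → α) :=
  {x | ∀ j, x j - a j ≤ x i - a i}

/-- The tropical polytope generated by the points `v 0, …, v (p-1)`:
each coordinate of `x` is the maximum over `r` of `l r + v r i`. -/
def tropPoly {n p : ℕ} (v : Fin p → Fin n → α) : Set (Fin n → α) :=
  {x | ∃ l : Fin p → α, ∀ i, IsGreatest (Set.range fun r => l r + v r i) (x i)}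

/-- `v` is an extreme point of `P` of type `i`. -/
def ExtremeOfType {n : ℕ} (P : Set (Fin n → α)) (v : Fin n → α) (i : Fin n) : Prop :=
  v ∈ P ∧ ∀ x ∈ P ∩ sector v i, ∃ c : α, x = fun k => v k + c

/-- `v` is an extreme point of `P`. -/
def IsExtremePt {n : ℕ} (P : Set (Fin n → α)) (v : Fin n → α) : Prop :=
  v ∈ P ∧ ∀ x ∈ P, ∀ y ∈ P, (∀ k, v k = max (x k) (y k)) → v = x ∨ v = y

/-- The tropical half-space `H(a,I)`: `max_{i ∈ I} (x_i - a_i) ≥ max_{j ∉ I} (x_j - a_j)`. -/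
def halfSpace {n : ℕ} (a : Fin n → α) (I : Set (Fin n)) : Set (Fin n → α) :=
  {x | ∃ i ∈ I, ∀ j ∉ I, x j - a j ≤ x i - a i}

/-- `S_i(a)`, the set of indices `r` such that `v r ∈ S(a, i)`. -/
def typeSet {n p : ℕ} (v : Fin p → Fin n → α) (a : Fin n → α) (i : Fin n) : Set (Fin p) :=
  {r | v r ∈ sector a i}

/-- `a` is an `(I,j)`-pseudovertex of the tropical polytope generated by `v`. -/
def IsPseudovertex {n p : ℕ} (v : Fin p → Fin n → α) (a : Fin n → α) (I : Set (Fin n))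
    (j : Fin n) : Prop :=
  (∀ r, ∃ i ∈ I, r ∈ typeSet v a i) ∧
  (∀ k ∉ I, ∃ i ∈ I, (typeSet v a i ∩ typeSet v a k).Nonempty) ∧
  (∀ i ∈ I, ∃ r, r ∈ typeSet v a i ∩ typeSet v a j ∧ ∀ h ∈ I, h ≠ i → r ∉ typeSet v a h)

end Defs

/-- `P` is pure: `P₀ = {x ∈ P | x 0 = 0}` equals the closure of its interior, relative to
the hyperplane `{x | x 0 = 0}` with the subspace topology. -/
def IsPure {n : ℕ} [NeZero n] (P : Set (Fin n → ℝ)) : Prop :=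
  letI P0 : Set {x : Fin n → ℝ // x 0 = 0} := {x | (x : Fin n → ℝ) ∈ P}
  P0 = closure (interior P0)

/-- `x` lies in the boundary of the half-space `H(a,I)`, i.e.
`max_{i ∈ I} (x_i - a_i) = max_{j ∉ I} (x_j - a_j)`. -/
def InBoundary {α : Type*} [LinearOrder α] [AddCommGroup α] {n : ℕ}
    (a : Fin n → α) (I : Set (Fin n)) (x : Fin n → α) : Prop :=
  (∃ i ∈ I, ∀ j ∉ I, x j - a j ≤ x i - a i) ∧ (∃ j ∉ I, ∀ i ∈ I, x i - a i ≤ x j - a j)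

/-!
For fixed `k`, membership `x ∈ sector a k` is a preorder (compare coordinates after normalising the
`k`-th one to `0`). A point lies in the polytope iff each of its sectors contains a generator, and
the extreme points of type `k` are the minimal points of the polytope for this preorder. Hence a
generator that lies in the `k`-th open sector of a point can be replaced by an extreme one of type
`k`. Around an interior point every open sector contains a generator, and open sectors are disjoint.
Purity lets us approximate any `x` in the polytope by interior points, so `x` has `n` distinct
extreme generators, the `k`-th one being of type `k` and in the `k`-th sector of `x`.

At a pseudovertex `a` this is applied to perturbations of `a`. For each `J ⊆ I`, let `G` be the
union of the covectors of the generators whose covector meets `I` inside `J`. Lowering slightly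
the coordinates of `a` outside `G` gives another point of the polytope; its extreme generators of
type `k ∈ G` have covectors at `a` contained in `G`, which therefore meet `I` inside `J`. For `k`
outside `I ∪ {j}` take `J` minimal among the traces on `I` of covectors containing `k`, and use the
generator of type `k`; for `i ∈ I` take `J = {i}`, and use the generator of type `j`. By minimality
the chosen generator has trace exactly `J`, so equal generators come from the same `J`, hence from
the same family of distinct generators.
-/

open Filter Topology Set

section AddGroup

variable {α : Type*} [AddGroup α] {n : ℕ}

/-- The representative of the class of `x` modulo constant vectors whose `k`-th coordinate
is `0`. It turns the sector relation into the coordinatewise order. -/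
def normalizeAt (k : Fin n) (x : Fin n → α) : Fin n → α :=
  fun l => x l - x k

/-- The point `a` with its coordinates outside `G` lowered by `t`. -/
noncomputable def lowerOff (G : Set (Fin n)) (t : α) (a : Fin n → α) : Fin n → α :=
  a - Gᶜ.indicator fun _ => t

theorem normalizeAt_add_const (k : Fin n) (x : Fin n → α) (c : α) :
    normalizeAt k (fun l => x l + c) = normalizeAt k x :=
  funext fun l => add_sub_add_right_eq_sub (x l) (x k) c

theorem lowerOff_of_mem {G : Set (Fin n)} {k : Fin n} (hk : k ∈ G) (t : α) (a : Fin n → α) :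
    lowerOff G t a k = a k := by
  simp [lowerOff, hk]

theorem lowerOff_of_notMem {G : Set (Fin n)} {k : Fin n} (hk : k ∉ G) (t : α) (a : Fin n → α) :
    lowerOff G t a k = a k - t := by
  simp [lowerOff, hk]

end AddGroup

section OrderedGroup

variable {α : Type*} [LinearOrder α] [AddCommGroup α] {n p : ℕ}

/-- The open version of `sector a k`, where all the other coordinates of `x - a` are strictly
smaller than the `k`-th one. -/
def openSector (a : Fin n → α) (k : Fin n) : Set (Fin n → α) :=
  {x | ∀ l ≠ k, x l - a l < x k - a k}

/-- The covector of `x` at `a`: the labels of the sectors of `a` that contain `x`. -/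
def covector (a x : Fin n → α) : Set (Fin n) :=
  {k | x ∈ sector a k}

/-- `G` is a union of covectors at `a` of the generators `v r`. -/
def IsCovectorUnion (v : Fin p → Fin n → α) (a : Fin n → α) (G : Set (Fin n)) : Prop :=
  ∀ k ∈ G, ∃ r, k ∈ covector a (v r) ∧ covector a (v r) ⊆ G

/-- The union of the covectors at `a` of the generators whose covector meets `I` inside `J`. -/
def traceUnion (v : Fin p → Fin n → α) (a : Fin n → α) (I J : Set (Fin n)) : Set (Fin n) :=
  {k | ∃ r, k ∈ covector a (v r) ∧ covector a (v r) ∩ I ⊆ J}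

/-- `J` is minimal among the traces on `I` of the covectors at `a` that contain `k`. -/
def IsMinimalTrace (v : Fin p → Fin n → α) (a : Fin n → α) (I : Set (Fin n)) (k : Fin n)
    (J : Set (Fin n)) : Prop :=
  Minimal (· ∈ (fun r => covector a (v r) ∩ I) '' typeSet v a k) J

theorem inBoundary_of_mem_sector {a x : Fin n → α} {I : Set (Fin n)} {i j : Fin n} (hi : i ∈ I)
    (hj : j ∉ I) (hxi : x ∈ sector a i) (hxj : x ∈ sector a j) : InBoundary a I x :=
  ⟨⟨i, hi, fun l _ => hxi l⟩, ⟨j, hj, fun l _ => hxj l⟩⟩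

theorem disjoint_openSector (a : Fin n → α) {k l : Fin n} (hkl : k ≠ l) :
    Disjoint (openSector a k) (openSector a l) :=
  disjoint_left.2 fun _ hxk hxl => lt_asymm (hxk l hkl.symm) (hxl k hkl)

theorem openSector_subset_sector (a : Fin n → α) (k : Fin n) : openSector a k ⊆ sector a k := by
  intro x hx l
  obtain rfl | hl := eq_or_ne l k
  · exact le_rfl
  · exact (hx l hl).le

theorem mem_sector_of_sub_le {a x : Fin n → α} {k l : Fin n} (hx : x ∈ sector a k)
    (hkl : x k - a k ≤ x l - a l) : x ∈ sector a l :=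
  fun m => (hx m).trans hkl

theorem isCovectorUnion_traceUnion (v : Fin p → Fin n → α) (a : Fin n → α) (I J : Set (Fin n)) :
    IsCovectorUnion v a (traceUnion v a I J) :=
  fun _ ⟨r, hk, hr⟩ => ⟨r, hk, fun _ hl => ⟨r, hl, hr⟩⟩

theorem traceUnion_inter_subset (v : Fin p → Fin n → α) (a : Fin n → α) (I J : Set (Fin n)) :
    traceUnion v a I J ∩ I ⊆ J :=
  fun _ ⟨⟨_, hk, hr⟩, hkI⟩ => hr ⟨hk, hkI⟩

theorem IsMinimalTrace.mem_traceUnion {v : Fin p → Fin n → α} {a : Fin n → α} {I J : Set (Fin n)}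
    {k : Fin n} (hJ : IsMinimalTrace v a I k J) : k ∈ traceUnion v a I J := by
  obtain ⟨r, hr, hrJ⟩ := hJ.prop
  exact ⟨r, hr, hrJ.subset⟩

theorem IsMinimalTrace.covector_inter_eq {v : Fin p → Fin n → α} {a : Fin n → α}
    {I J : Set (Fin n)} {k : Fin n} {r : Fin p} (hJ : IsMinimalTrace v a I k J)
    (hk : k ∈ covector a (v r)) (hr : covector a (v r) ⊆ traceUnion v a I J) :
    covector a (v r) ∩ I = J :=
  hJ.eq_of_subset ⟨r, hk, rfl⟩
    ((inter_subset_inter_left I hr).trans (traceUnion_inter_subset v a I J))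

theorem exists_isMinimalTrace {v : Fin p → Fin n → α} {a : Fin n → α} {k : Fin n}
    (hk : (typeSet v a k).Nonempty) (I : Set (Fin n)) : ∃ J, IsMinimalTrace v a I k J :=
  (toFinite _).exists_minimal (hk.image _)

theorem IsPseudovertex.typeSet_nonempty {v : Fin p → Fin n → α} {a : Fin n → α} {I : Set (Fin n)}
    {j : Fin n} (ha : IsPseudovertex v a I j) (k : Fin n) : (typeSet v a k).Nonempty := by
  by_cases hk : k ∈ I
  · obtain ⟨r, hr, -⟩ := ha.2.2 k hk
    exact ⟨r, hr.1⟩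
  · obtain ⟨_, -, r, hr⟩ := ha.2.1 k hk
    exact ⟨r, hr.2⟩

theorem IsPseudovertex.isMinimalTrace_singleton {v : Fin p → Fin n → α} {a : Fin n → α}
    {I : Set (Fin n)} {i j : Fin n} (ha : IsPseudovertex v a I j) (hi : i ∈ I) :
    IsMinimalTrace v a I j {i} := by
  obtain ⟨r, ⟨hri, hrj⟩, hr⟩ := ha.2.2 i hi
  have trace_eq : covector a (v r) ∩ I = {i} :=
    Subset.antisymm (fun h ⟨hh, hhI⟩ => by_contra fun hne => hr h hhI hne hh)
      (singleton_subset_iff.2 ⟨hri, hi⟩)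
  refine ⟨⟨r, hrj, trace_eq⟩, ?_⟩
  rintro _ ⟨s, -, rfl⟩ hs
  obtain ⟨h, hhI, hsh⟩ := ha.1 s
  have hhi : h = i := hs ⟨hsh, hhI⟩
  exact singleton_subset_iff.2 ⟨hhi ▸ hsh, hi⟩

variable [IsOrderedAddMonoid α]

theorem mem_sector_iff_normalizeAt_le {a x : Fin n → α} {k : Fin n} :
    x ∈ sector a k ↔ normalizeAt k x ≤ normalizeAt k a :=
  forall_congr' fun l => by
    rw [normalizeAt, normalizeAt, sub_le_sub_iff, sub_le_sub_iff, add_comm (a l)]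

theorem mem_sector_self (x : Fin n → α) (k : Fin n) : x ∈ sector x k :=
  mem_sector_iff_normalizeAt_le.2 le_rfl

theorem mem_openSector_of_mem_sector {a x y : Fin n → α} {k : Fin n} (hyx : y ∈ sector x k)
    (hx : x ∈ openSector a k) : y ∈ openSector a k := by
  intro l hl
  have hyl := hyx l
  have hxl := hx l hl
  grind

theorem mem_tropPoly_iff {v : Fin p → Fin n → α} {x : Fin n → α} :
    x ∈ tropPoly v ↔ ∀ k, (typeSet v x k).Nonempty := by
  constructor
  · rintro ⟨c, hc⟩ k
    obtain ⟨r, hr⟩ := (hc k).1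
    refine ⟨r, fun l => ?_⟩
    have hl : c r + v r l ≤ x l := (hc l).2 ⟨r, rfl⟩
    grind
  · intro hx
    cases isEmpty_or_nonempty (Fin n)
    · exact ⟨0, isEmptyElim⟩
    -- The largest `c r` for which `c r + v r ≤ x` is the minimum of the coordinates of `x - v r`.
    choose m hm using fun r => Finite.exists_min fun k => x k - v r k
    refine ⟨fun r => x (m r) - v r (m r), fun k => ⟨?_, ?_⟩⟩
    · obtain ⟨r, hr⟩ := hx k
      have hmk := hr (m r)
      exact ⟨r, by grind⟩
    · rintro _ ⟨r, rfl⟩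
      exact add_le_of_le_sub_right (hm r k)

theorem generator_mem_tropPoly (v : Fin p → Fin n → α) (r : Fin p) : v r ∈ tropPoly v :=
  mem_tropPoly_iff.2 fun k => ⟨r, mem_sector_self (v r) k⟩

theorem add_const_mem_tropPoly {v : Fin p → Fin n → α} {x : Fin n → α} (hx : x ∈ tropPoly v)
    (c : α) : (fun l => x l + c) ∈ tropPoly v := by
  rw [mem_tropPoly_iff] at hx ⊢
  intro k
  obtain ⟨r, hr⟩ := hx k
  refine ⟨r, mem_sector_iff_normalizeAt_le.2 ?_⟩
  simpa only [normalizeAt_add_const] using mem_sector_iff_normalizeAt_le.1 hr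

theorem exists_extremeOfType_mem_sector (v : Fin p → Fin n → α) (r : Fin p) (k : Fin n) :
    ∃ s, ExtremeOfType (tropPoly v) (v s) k ∧ v s ∈ sector (v r) k := by
  obtain ⟨_, hsr, ⟨s, rfl⟩, hmin⟩ := (finite_range fun s => normalizeAt k (v s)).exists_le_minimal
    (mem_range_self r)
  refine ⟨s, ⟨generator_mem_tropPoly v s, ?_⟩, mem_sector_iff_normalizeAt_le.2 hsr⟩
  rintro x ⟨hx, hxs⟩
  rw [mem_sector_iff_normalizeAt_le] at hxs
  obtain ⟨t, ht⟩ := mem_tropPoly_iff.1 hx k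
  have htx : normalizeAt k (v t) ≤ normalizeAt k x := mem_sector_iff_normalizeAt_le.1 ht
  have normalizeAt_eq : normalizeAt k x = normalizeAt k (v s) :=
    hxs.antisymm ((hmin ⟨t, rfl⟩ (htx.trans hxs)).trans htx)
  refine ⟨x k - v s k, funext fun l => ?_⟩
  have hl : x l - x k = v s l - v s k := congrFun normalizeAt_eq l
  grind

theorem ExtremeOfType.eq_of_le {P : Set (Fin n → α)} {w x : Fin n → α} {k : Fin n}
    (hw : ExtremeOfType P w k) (hx : x ∈ P) (hle : x ≤ w) (hk : w k = x k) : w = x := by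
  obtain ⟨c, rfl⟩ := hw.2 x ⟨hx, fun l => by simpa [hk] using hle l⟩
  have hc : c = 0 := by simpa using hk
  simp [hc]

theorem ExtremeOfType.isExtremePt {P : Set (Fin n → α)} {w : Fin n → α} {k : Fin n}
    (hw : ExtremeOfType P w k) : IsExtremePt P w := by
  refine ⟨hw.1, fun x hx y hy hmax => ?_⟩
  obtain rfl : w = x ⊔ y := funext hmax
  rcases max_choice (x k) (y k) with hk | hk
  · exact Or.inl (hw.eq_of_le hx le_sup_left hk)
  · exact Or.inr (hw.eq_of_le hy le_sup_right hk)

theorem mem_sector_and_covector_subset_of_mem_sector_lowerOff {G : Set (Fin n)} {t : α}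
    (ht : 0 < t) {a x : Fin n → α} {k : Fin n} (hk : k ∈ G) (hx : x ∈ sector (lowerOff G t a) k) :
    x ∈ sector a k ∧ covector a x ⊆ G := by
  have sub_le : ∀ l ∈ G, x l - a l ≤ x k - a k := fun l hl => by
    simpa only [lowerOff_of_mem hl, lowerOff_of_mem hk] using hx l
  have sub_lt : ∀ l ∉ G, x l - a l < x k - a k := fun l hl => by
    have hxl := hx l
    rw [lowerOff_of_notMem hl, lowerOff_of_mem hk] at hxl
    grind
  refine ⟨fun l => ?_, fun l hl => by_contra fun hlG => (hl k).not_gt (sub_lt l hlG)⟩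
  by_cases hl : l ∈ G
  · exact sub_le l hl
  · exact (sub_lt l hl).le

theorem mem_sector_lowerOff_of_notMem {G : Set (Fin n)} {t : α} (ht : 0 ≤ t) {a x : Fin n → α}
    {k : Fin n} (hk : k ∉ G) (hx : x ∈ sector a k) : x ∈ sector (lowerOff G t a) k := by
  intro l
  have hxl := hx l
  rw [lowerOff_of_notMem hk]
  by_cases hl : l ∈ G
  · rw [lowerOff_of_mem hl]
    grind
  · rw [lowerOff_of_notMem hl]
    grind

end OrderedGroup

section Real

variable {n p : ℕ}

theorem eventually_typeSet_subset (v : Fin p → Fin n → ℝ) (x : Fin n → ℝ) :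
    ∀ᶠ y in 𝓝 x, ∀ k, typeSet v y k ⊆ typeSet v x k := by
  simp only [subset_def, eventually_all]
  intro k r
  by_cases hr : r ∈ typeSet v x k
  · exact Eventually.of_forall fun _ _ => hr
  have isClosed_sector : IsClosed {y : Fin n → ℝ | v r ∈ sector y k} := by
    simp only [sector, mem_ofPred_eq]
    rw [ofPred_forall]
    exact isClosed_iInter fun l => isClosed_le (by fun_prop) (by fun_prop)
  filter_upwards [isClosed_sector.isOpen_compl.mem_nhds hr] with y hy hry
  exact absurd hry hy

theorem exists_mem_openSector_of_mem_interior {v : Fin p → Fin n → ℝ} {y : Fin n → ℝ}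
    (hy : y ∈ interior (tropPoly v)) (k : Fin n) : ∃ r, v r ∈ openSector y k := by
  have continuous_raise : Continuous fun t : ℝ => Function.update y k (y k + t) := by fun_prop
  have raise_mem : ∀ᶠ t in 𝓝[>] (0 : ℝ), Function.update y k (y k + t) ∈ tropPoly v := by
    refine nhdsWithin_le_nhds (continuous_raise.continuousAt ?_)
    simpa using mem_interior_iff_mem_nhds.1 hy
  obtain ⟨t, hmem, ht : 0 < t⟩ := (raise_mem.and self_mem_nhdsWithin).exists
  obtain ⟨r, hr⟩ := mem_tropPoly_iff.1 hmem k
  refine ⟨r, fun l hl => ?_⟩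
  have hrl := hr l
  rw [Function.update_self, Function.update_of_ne hl] at hrl
  linarith

theorem IsPure.subset_closure_interior [NeZero n] {P : Set (Fin n → ℝ)} (hP : IsPure P)
    (add_const_mem : ∀ x ∈ P, ∀ c : ℝ, (fun l => x l + c) ∈ P) : P ⊆ closure (interior P) := by
  let P₀ : Set {x : Fin n → ℝ // x 0 = 0} := Subtype.val ⁻¹' P
  let π : (Fin n → ℝ) → {x : Fin n → ℝ // x 0 = 0} := fun x => ⟨normalizeAt 0 x, sub_self _⟩
  have hπ : Continuous π := by
    unfold π normalizeAt
    fun_prop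
  have hπ_open : IsOpenMap π := IsOpenMap.of_sections fun x =>
    ⟨fun y => y.1 + fun _ => x 0, by fun_prop, funext fun l => sub_add_cancel (x l) (x 0),
      fun y => Subtype.ext <| funext fun l => by simp [π, normalizeAt, y.2]⟩
  have preimage_eq : π ⁻¹' P₀ = P := by
    ext x
    refine ⟨fun hx => ?_, fun hx => ?_⟩
    · simpa [π, normalizeAt] using add_const_mem _ hx (x 0)
    · change (fun l => x l - x 0) ∈ P
      simpa only [sub_eq_add_neg] using add_const_mem x hx (-x 0)
  calc P = π ⁻¹' P₀ := preimage_eq.symm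
    _ = π ⁻¹' closure (interior P₀) := congrArg (π ⁻¹' ·) hP
    _ = closure (interior (π ⁻¹' P₀)) := by
      rw [hπ_open.preimage_closure_eq_closure_preimage hπ,
        hπ_open.preimage_interior_eq_interior_preimage hπ]
    _ ⊆ closure (interior P) := by rw [preimage_eq]

theorem eventually_lowerOff_mem_tropPoly {v : Fin p → Fin n → ℝ} {a : Fin n → ℝ}
    {G : Set (Fin n)} (ha : a ∈ tropPoly v) (hG : IsCovectorUnion v a G) :
    ∀ᶠ t in 𝓝[>] (0 : ℝ), lowerOff G t a ∈ tropPoly v := by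
  simp only [mem_tropPoly_iff, eventually_all]
  intro k
  by_cases hk : k ∈ G
  · obtain ⟨r, hrk, hrG⟩ := hG k hk
    have gap : ∀ l ∉ G, v r l - a l < v r k - a k := fun l hl =>
      not_le.1 fun hle => hl (hrG (mem_sector_of_sub_le hrk hle))
    have small : ∀ᶠ t in 𝓝[>] (0 : ℝ), ∀ l ∉ G, t < (v r k - a k) - (v r l - a l) := by
      simp only [eventually_all]
      exact fun l hl => nhdsWithin_le_nhds (Iio_mem_nhds (sub_pos.2 (gap l hl)))
    filter_upwards [small] with t ht
    refine ⟨r, fun l => ?_⟩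
    rw [lowerOff_of_mem hk]
    by_cases hl : l ∈ G
    · rw [lowerOff_of_mem hl]
      exact hrk l
    · rw [lowerOff_of_notMem hl]
      linarith [ht l hl]
  · obtain ⟨r, hr⟩ := mem_tropPoly_iff.1 ha k
    filter_upwards [self_mem_nhdsWithin] with t ht
    exact ⟨r, mem_sector_lowerOff_of_notMem (le_of_lt ht) hk hr⟩

section Pure

variable [NeZero n] {v : Fin p → Fin n → ℝ} {a : Fin n → ℝ} {I : Set (Fin n)}

theorem IsPure.exists_injective_extremeOfType (hpure : IsPure (tropPoly v)) {x : Fin n → ℝ}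
    (hx : x ∈ tropPoly v) : ∃ s : Fin n → Fin p, Function.Injective (v ∘ s) ∧
      ∀ k, ExtremeOfType (tropPoly v) (v (s k)) k ∧ v (s k) ∈ sector x k := by
  have hx_closure : x ∈ closure (interior (tropPoly v)) :=
    hpure.subset_closure_interior (fun _ => add_const_mem_tropPoly) hx
  obtain ⟨y, hy, typeSet_subset⟩ := ((mem_closure_iff_frequently.1 hx_closure).and_eventually
    (eventually_typeSet_subset v x)).exists
  choose r hr using exists_mem_openSector_of_mem_interior hy
  choose s hs hsr using fun k => exists_extremeOfType_mem_sector v (r k) k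
  have hsy : ∀ k, v (s k) ∈ openSector y k := fun k => mem_openSector_of_mem_sector (hsr k) (hr k)
  refine ⟨s, fun k l (hkl : v (s k) = v (s l)) => by_contra fun hne => ?_,
    fun k => ⟨hs k, typeSet_subset k (openSector_subset_sector y k (hsy k))⟩⟩
  exact disjoint_left.1 (disjoint_openSector y hne) (hsy k) (hkl ▸ hsy l)

theorem IsPure.exists_injective_extremeOfType_covector_subset (hpure : IsPure (tropPoly v))
    (ha : a ∈ tropPoly v) {G : Set (Fin n)} (hG : IsCovectorUnion v a G) :
    ∃ s : Fin n → Fin p, Function.Injective (v ∘ s) ∧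
      (∀ k, ExtremeOfType (tropPoly v) (v (s k)) k) ∧
      ∀ k ∈ G, v (s k) ∈ sector a k ∧ covector a (v (s k)) ⊆ G := by
  obtain ⟨t, hmem, ht⟩ :=
    ((eventually_lowerOff_mem_tropPoly ha hG).and self_mem_nhdsWithin).exists
  obtain ⟨s, hinj, hs⟩ := hpure.exists_injective_extremeOfType hmem
  exact ⟨s, hinj, fun k => (hs k).1, fun k hk =>
    mem_sector_and_covector_subset_of_mem_sector_lowerOff ht hk (hs k).2⟩

theorem IsPure.exists_injective_extremeOfType_covector_inter_eq (hpure : IsPure (tropPoly v))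
    (ha : a ∈ tropPoly v) (I J : Set (Fin n)) :
    ∃ s : Fin n → Fin p, Function.Injective (v ∘ s) ∧
      ∀ k, IsMinimalTrace v a I k J → ExtremeOfType (tropPoly v) (v (s k)) k ∧
        v (s k) ∈ sector a k ∧ covector a (v (s k)) ∩ I = J := by
  obtain ⟨s, hinj, hext, hs⟩ := hpure.exists_injective_extremeOfType_covector_subset ha
    (isCovectorUnion_traceUnion v a I J)
  refine ⟨s, hinj, fun k hJ => ?_⟩
  obtain ⟨hk, hsub⟩ := hs k hJ.mem_traceUnion
  exact ⟨hext k, hk, hJ.covector_inter_eq hk hsub⟩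

theorem IsPure.exists_extremeOfType_of_isMinimalTrace (hpure : IsPure (tropPoly v))
    (ha : a ∈ tropPoly v) {ι : Type*} {J : ι → Set (Fin n)} {m : ι → Fin n}
    (hJ : ∀ k, IsMinimalTrace v a I (m k) (J k)) :
    ∃ r : ι → Fin p,
      (∀ k k', v (r k) = v (r k') → J k = J k' ∧ m k = m k') ∧
      ∀ k, ExtremeOfType (tropPoly v) (v (r k)) (m k) ∧ v (r k) ∈ sector a (m k) ∧
        covector a (v (r k)) ∩ I = J k := by
  choose s hinj hs using hpure.exists_injective_extremeOfType_covector_inter_eq ha I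
  have hr := fun k => hs (J k) (m k) (hJ k)
  refine ⟨fun k => s (J k) (m k), fun k k' heq => ?_, hr⟩
  have J_eq : J k = J k' := by rw [← (hr k).2.2, ← (hr k').2.2, heq]
  exact ⟨J_eq, hinj (J k) (heq.trans (by rw [J_eq]; rfl))⟩

theorem IsPseudovertex.exists_extremeOfType (hpure : IsPure (tropPoly v)) {j : Fin n}
    (ha : IsPseudovertex v a I j) :
    ∃ r : Fin n → Fin p, InjOn (v ∘ r) {j}ᶜ ∧
      (∀ k ∉ I, ExtremeOfType (tropPoly v) (v (r k)) k ∧ v (r k) ∈ sector a k) ∧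
      ∀ i ∈ I, ExtremeOfType (tropPoly v) (v (r i)) j ∧ v (r i) ∈ sector a j ∧
        covector a (v (r i)) ∩ I = {i} := by
  classical
  choose Jmin hJmin using fun k => exists_isMinimalTrace (ha.typeSet_nonempty k) I
  let J : Fin n → Set (Fin n) := fun k => if k ∈ I then {k} else Jmin k
  let m : Fin n → Fin n := fun k => if k ∈ I then j else k
  have hJ : ∀ k, IsMinimalTrace v a I (m k) (J k) := fun k => by
    by_cases hk : k ∈ I
    · simpa only [J, m, if_pos hk] using ha.isMinimalTrace_singleton hk
    · simpa only [J, m, if_neg hk] using hJmin k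
  obtain ⟨r, hinj, hr⟩ :=
    hpure.exists_extremeOfType_of_isMinimalTrace (mem_tropPoly_iff.2 ha.typeSet_nonempty) hJ
  refine ⟨r, fun k (hk : k ≠ j) k' (hk' : k' ≠ j) heq => ?_, fun k hk => ?_, fun i hi => ?_⟩
  · obtain ⟨J_eq, m_eq⟩ := hinj k k' heq
    by_cases hkI : k ∈ I <;> by_cases hkI' : k' ∈ I <;>
      simp only [J, m, hkI, hkI', if_true, if_false] at J_eq m_eq
    · exact singleton_injective J_eq
    · exact absurd m_eq.symm hk'
    · exact absurd m_eq hk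
    · exact m_eq
  · obtain ⟨hext, hmem, -⟩ := hr k
    simp only [m, if_neg hk] at hext hmem
    exact ⟨hext, hmem⟩
  · simpa only [J, m, if_pos hi] using hr i

end Pure

end Real

/-- if `P` is pure and `a` is an `(I,j)`-pseudovertex of `P`, then there are
pairwise distinct indices `r k` for `k ≠ j` such that: for `k ∉ I ∪ {j}`, `vs (r k)` is an
extreme point of `P` of type `k` with `r k ∈ S_k(a)`; for `i ∈ I`, `vs (r i)` is an extreme
point of `P` of type `j` with `r i ∈ (S_i(a) ∩ S_j(a)) \ ⋃_{h ∈ I, h ≠ i} S_h(a)`; and each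
`vs (r k)` lies in the boundary of `H(a,I)`.  In particular the boundary of `H(a,I)`
contains at least `n - 1` extreme points of `P`. -/
theorem pseudovertex_boundary_extreme_points {n p : ℕ} [NeZero n] (hn : 2 ≤ n)
    (vs : Fin p → Fin n → ℝ) (hpure : IsPure (tropPoly vs))
    (a : Fin n → ℝ) (I : Set (Fin n)) (j : Fin n)
    (hIne : I.Nonempty) (hIpr : I ≠ Set.univ) (hj : j ∉ I)
    (hpv : IsPseudovertex vs a I j) :
    (∃ r : Fin n → Fin p,
      (∀ k k' : Fin n, k ≠ j → k' ≠ j → r k = r k' → k = k') ∧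
      (∀ k : Fin n, k ∉ I → k ≠ j →
        ExtremeOfType (tropPoly vs) (vs (r k)) k ∧ r k ∈ typeSet vs a k) ∧
      (∀ i ∈ I, ExtremeOfType (tropPoly vs) (vs (r i)) j ∧
        r i ∈ typeSet vs a i ∩ typeSet vs a j ∧ (∀ h ∈ I, h ≠ i → r i ∉ typeSet vs a h)) ∧
      (∀ k : Fin n, k ≠ j → InBoundary a I (vs (r k)))) ∧
    (∃ T : Finset (Fin n → ℝ), n - 1 ≤ T.card ∧
      ∀ w ∈ T, IsExtremePt (tropPoly vs) w ∧ InBoundary a I w) := by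
  classical
  obtain ⟨r, hinj, hout, hin⟩ := hpv.exists_extremeOfType hpure
  have htypes : ∀ i ∈ I, r i ∈ typeSet vs a i ∩ typeSet vs a j ∧
      ∀ h ∈ I, h ≠ i → r i ∉ typeSet vs a h := fun i hi => by
    obtain ⟨-, hrj, htrace⟩ := hin i hi
    exact ⟨⟨(htrace.superset rfl).1, hrj⟩, fun h hh hne hrh => hne (htrace.subset ⟨hrh, hh⟩)⟩
  have hextreme : ∀ k, IsExtremePt (tropPoly vs) (vs (r k)) := fun k =>
    if hk : k ∈ I then (hin k hk).1.isExtremePt else (hout k hk).1.isExtremePt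
  have hboundary : ∀ k, InBoundary a I (vs (r k)) := fun k => by
    by_cases hk : k ∈ I
    · exact inBoundary_of_mem_sector hk hj (htypes k hk).1.1 (htypes k hk).1.2
    · obtain ⟨i, hi, hri⟩ := hpv.1 (r k)
      exact inBoundary_of_mem_sector hi hk hri (hout k hk).2
  refine ⟨⟨r, fun k k' hk hk' heq => hinj hk hk' (congrArg vs heq), fun k hk _ => hout k hk,
    fun i hi => ⟨(hin i hi).1, htypes i hi⟩, fun k _ => hboundary k⟩,
    ({j}ᶜ : Finset (Fin n)).image (vs ∘ r), ?_, ?_⟩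
  · rw [Finset.card_image_of_injOn (by simpa using hinj), Finset.card_compl]
    simp
  · simp only [Finset.forall_mem_image]
    exact fun k _ => ⟨hextreme k, hboundary k⟩
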